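/- Let α > 0 and τ ∈ ℝ, set ᾱ = √(1+α²), and for u ∈ (0,1) define x(u) = √(2 ln(1/u)) − [ln(2√π) + (1/2)·ln ln(1/u) + ln Φ(τ/ᾱ)] / √(2 ln(1/u)). Then x(u) is an asymptotic (1−u)-quantile of the univariate extended skew-normal distribution: lim_{u→0⁺} (1 − Φ_{α,τ}(x(u)))/u = 1. -/

import Mathlib

/-!
Write `Φ₀ = Φ(τ/√(1+α²))`. The proof combines three facts.

* The extended skew-normal density has total mass one, i.e. `∫ φ(t) Φ(αt+τ) dt = Φ₀`
  (`integral_stdPdf_mul_stdCdf`): both sides are the probability that `Y - αX ≤ τ` for independent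
  standard normal `X`, `Y`, because `Y - αX` is centred normal with variance `1 + α²`.
* The tail satisfies a Mills-ratio asymptotic, `1 - Φ_{α,τ}(x) ~ φ(x) / (x Φ₀)` as `x → ∞`
  (`tendsto_esn_tail_div`). This follows from L'Hôpital's rule, since
  `(φ(x)/x)' = -φ(x)(1 + 1/x²)` and, as `α > 0`, `Φ(αx+τ) → 1`.
* In the variable `s = √(2 ln(1/u))`, so `u = exp(-s²/2)`, the quantile is
  `x = s - (ln s + K)/s` with `exp K = √(2π) Φ₀` (`xquant_eq`). Expanding the square,
  `φ(x) / (x Φ₀ u) = (s/x) exp(-((ln s + K)/s)²/2)`, which tends to `1` as `s → ∞`.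
-/

open MeasureTheory Filter Matrix

/-- standard normal density -/
noncomputable def stdPdf (t : ℝ) : ℝ := Real.exp (-t^2/2) / Real.sqrt (2*Real.pi)

/-- standard normal cdf Φ -/
noncomputable def stdCdf (x : ℝ) : ℝ := ∫ t in Set.Iic x, stdPdf t

/-- univariate extended skew-normal cdf Φ_{α,τ} -/
noncomputable def esnCdf (α τ x : ℝ) : ℝ :=
  ∫ t in Set.Iic x, stdPdf t * stdCdf (α*t+τ) / stdCdf (τ / Real.sqrt (1+α^2))

/-- asymptotic (1−u)-quantile of the univariate extended skew-normal
distribution with α > 0. -/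
noncomputable def xquant (α τ u : ℝ) : ℝ :=
  Real.sqrt (2 * Real.log (1/u)) -
    (Real.log (2*Real.sqrt Real.pi) + (1/2) * Real.log (Real.log (1/u)) +
        Real.log (stdCdf (τ / Real.sqrt (1+α^2)))) /
      Real.sqrt (2 * Real.log (1/u))

open Topology ProbabilityTheory

lemma hasDerivAt_integral_Iic {f : ℝ → ℝ} (hc : Continuous f) (hi : Integrable f) (x : ℝ) :
    HasDerivAt (fun y => ∫ t in Set.Iic y, f t) (f x) x := by
  have h : (fun y => ∫ t in Set.Iic y, f t)
      = fun y => (∫ t in (0:ℝ)..y, f t) + ∫ t in Set.Iic 0, f t := by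
    funext y
    rw [← intervalIntegral.integral_Iic_sub_Iic hi.integrableOn hi.integrableOn]
    ring
  rw [h]
  exact (hc.integral_hasStrictDerivAt 0 x).hasDerivAt.add_const _

lemma tendsto_integral_Iic {f : ℝ → ℝ} (hi : Integrable f) :
    Tendsto (fun y => ∫ t in Set.Iic y, f t) atTop (𝓝 (∫ t, f t)) :=
  (aecover_Iic tendsto_id).integral_tendsto_of_countably_generated hi

lemma stdPdf_eq : stdPdf = gaussianPDFReal 0 1 := by
  funext t
  simp [stdPdf, gaussianPDFReal, div_eq_inv_mul]

lemma stdPdf_pos (t : ℝ) : 0 < stdPdf t := by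
  unfold stdPdf; positivity

lemma continuous_stdPdf : Continuous stdPdf := by
  unfold stdPdf; fun_prop

lemma integrable_stdPdf : Integrable stdPdf := by
  rw [stdPdf_eq]; exact integrable_gaussianPDFReal 0 1

lemma hasDerivAt_stdPdf (x : ℝ) : HasDerivAt stdPdf (-x * stdPdf x) x := by
  have h : HasDerivAt (fun t : ℝ => -t^2/2) (-x) x := by
    refine ((hasDerivAt_pow 2 x).neg.div_const 2).congr_deriv ?_
    norm_num
    ring
  refine (h.exp.div_const (Real.sqrt (2*Real.pi))).congr_deriv ?_
  unfold stdPdf; ring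

lemma stdCdf_eq (x : ℝ) : stdCdf x = (gaussianReal 0 1).real (Set.Iic x) := by
  rw [measureReal_def, gaussianReal_apply_eq_integral 0 one_ne_zero, ← stdPdf_eq,
    ENNReal.toReal_ofReal]
  · rfl
  · exact integral_nonneg fun t => (stdPdf_pos t).le

lemma stdCdf_pos (x : ℝ) : 0 < stdCdf x := by
  unfold stdCdf
  rw [setIntegral_pos_iff_support_of_nonneg_ae (ae_of_all _ fun t => (stdPdf_pos t).le)
    integrable_stdPdf.integrableOn]
  have : Function.support stdPdf = Set.univ := by
    ext t; simp [(stdPdf_pos t).ne']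
  simp [this]

lemma stdCdf_le_one (x : ℝ) : stdCdf x ≤ 1 := by
  rw [stdCdf_eq]; exact measureReal_le_one

lemma continuous_stdCdf : Continuous stdCdf :=
  continuous_iff_continuousAt.2 fun x =>
    (hasDerivAt_integral_Iic continuous_stdPdf integrable_stdPdf x).continuousAt

lemma tendsto_stdCdf : Tendsto stdCdf atTop (𝓝 1) := by
  have h := tendsto_integral_Iic integrable_stdPdf
  have h1 : ∫ t, stdPdf t = 1 := by
    rw [stdPdf_eq]; exact integral_gaussianPDFReal_eq_one 0 one_ne_zero
  rwa [h1] at h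

/-- The normalization of the extended skew-normal density. Both sides are the probability that
`Y - αX ≤ τ` for independent standard normal `X`, `Y`: on the left by conditioning on `X`, on the
right because the law of `Y - αX` is a standard normal scaled by `√(1+α²)`. -/
lemma integral_stdPdf_mul_stdCdf (α τ : ℝ) :
    ∫ t, stdPdf t * stdCdf (α*t+τ) = stdCdf (τ / Real.sqrt (1+α^2)) := by
  have hs : 0 < Real.sqrt (1+α^2) := Real.sqrt_pos.2 (by positivity)
  have hconv : ((gaussianReal 0 1).map ((-α) * ·)) ∗ (gaussianReal 0 1)
      = (gaussianReal 0 1).map (Real.sqrt (1+α^2) * ·) := by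
    rw [gaussianReal_map_const_mul, gaussianReal_map_const_mul, gaussianReal_conv_gaussianReal]
    congr 1
    · simp
    · ext
      simp only [mul_one, NNReal.coe_add, NNReal.coe_mk, NNReal.coe_one, neg_sq]
      rw [Real.sq_sqrt (by positivity), add_comm]
  have hL : (((gaussianReal 0 1).map ((-α) * ·)) ∗ (gaussianReal 0 1)) (Set.Iic τ)
      = ∫⁻ x, gaussianReal 0 1 (Set.Iic (α*x+τ)) ∂(gaussianReal 0 1) := by
    have hm : MeasurableSet ((fun p : ℝ × ℝ => p.1 + p.2) ⁻¹' Set.Iic τ) :=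
      measurableSet_Iic.preimage (by fun_prop)
    rw [Measure.conv, Measure.map_apply (by fun_prop) measurableSet_Iic, Measure.prod_apply hm,
      lintegral_map (measurable_measure_prodMk_left hm) (by fun_prop)]
    refine lintegral_congr fun x => congrArg _ ?_
    ext y
    simp only [Set.mem_preimage, Set.mem_Iic]
    constructor <;> intro h <;> linarith
  have hR : ((gaussianReal 0 1).map (Real.sqrt (1+α^2) * ·)) (Set.Iic τ)
      = gaussianReal 0 1 (Set.Iic (τ / Real.sqrt (1+α^2))) := by
    rw [Measure.map_apply (by fun_prop) measurableSet_Iic]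
    congr 1
    ext y
    simp only [Set.mem_preimage, Set.mem_Iic]
    rw [le_div_iff₀' hs]
  have hmeas : Measurable fun x : ℝ => gaussianReal 0 1 (Set.Iic (α*x+τ)) := by
    have : Monotone fun y : ℝ => gaussianReal 0 1 (Set.Iic y) :=
      fun a b hab => measure_mono (Set.Iic_subset_Iic.2 hab)
    exact this.measurable.comp (by fun_prop)
  have h1 : ∫ t, stdPdf t * stdCdf (α*t+τ)
      = ∫ t, (gaussianReal 0 1 (Set.Iic (α*t+τ))).toReal ∂(gaussianReal 0 1) := by
    rw [integral_gaussianReal_eq_integral_smul one_ne_zero, ← stdPdf_eq]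
    simp only [stdCdf_eq, measureReal_def, smul_eq_mul]
  rw [h1, integral_toReal hmeas.aemeasurable (ae_of_all _ fun _ => measure_lt_top _ _), ← hL,
    hconv, hR, stdCdf_eq, measureReal_def]

/-- The Mills-ratio asymptotic `1 - Φ_{α,τ}(x) ~ φ(x) / (x Φ(τ/√(1+α²)))` of the upper tail, by
L'Hôpital's rule. The normalization of the density is what makes `1 - Φ_{α,τ}` vanish at `∞`. -/
lemma tendsto_esn_tail_div {α : ℝ} (hα : 0 < α) (τ : ℝ) :
    Tendsto (fun x => (1 - esnCdf α τ x) / (stdPdf x / x)) atTop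
      (𝓝 (1 / stdCdf (τ / Real.sqrt (1+α^2)))) := by
  set c := stdCdf (τ / Real.sqrt (1+α^2)) with hc
  have hc0 : 0 < c := stdCdf_pos _
  set f : ℝ → ℝ := fun t => stdPdf t * stdCdf (α*t+τ) / c with hf
  have hfc : Continuous f :=
    (continuous_stdPdf.mul (continuous_stdCdf.comp (by fun_prop))).div_const _
  have hfi : Integrable f := by
    refine Integrable.div_const ?_ c
    refine integrable_stdPdf.mono'
      (continuous_stdPdf.mul (continuous_stdCdf.comp (by fun_prop))).aestronglyMeasurable
      (ae_of_all _ fun t => ?_)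
    rw [Real.norm_of_nonneg (mul_pos (stdPdf_pos _) (stdCdf_pos _)).le]
    exact mul_le_of_le_one_right (stdPdf_pos _).le (stdCdf_le_one _)
  have hint : ∫ t, f t = 1 := by
    rw [hf, integral_div, integral_stdPdf_mul_stdCdf, ← hc, div_self hc0.ne']
  have hesn : esnCdf α τ = fun y => ∫ t in Set.Iic y, f t := rfl
  have hnum : Tendsto (fun x => 1 - esnCdf α τ x) atTop (𝓝 0) := by
    have h := (tendsto_integral_Iic hfi).const_sub 1
    rwa [hint, sub_self] at h
  have hpdf : Tendsto stdPdf atTop (𝓝 0) := by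
    have h : Tendsto (fun t : ℝ => -t^2/2) atTop atBot := by
      have := ((tendsto_pow_atTop (α := ℝ) two_ne_zero).atTop_div_const two_pos)
      refine (tendsto_neg_atTop_atBot.comp this).congr fun t => ?_
      simp [neg_div]
    have := (Real.tendsto_exp_atBot.comp h).div_const (Real.sqrt (2*Real.pi))
    rwa [zero_div] at this
  have hden : Tendsto (fun x => stdPdf x / x) atTop (𝓝 0) := hpdf.div_atTop tendsto_id
  refine HasDerivAt.lhopital_zero_atTop (f' := fun x => -f x)
    (g' := fun x => -(stdPdf x * (1 + 1/x^2))) ?_ ?_ ?_ hnum hden ?_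
  · refine Eventually.of_forall fun x => ?_
    rw [hesn]
    exact (hasDerivAt_integral_Iic hfc hfi x).const_sub 1
  · filter_upwards [eventually_gt_atTop 0] with x hx
    refine ((hasDerivAt_stdPdf x).div (hasDerivAt_id' x) hx.ne').congr_deriv ?_
    field_simp
    ring
  · filter_upwards with x
    have := stdPdf_pos x
    have : 0 < 1 + 1/x^2 := by positivity
    exact (neg_neg_of_pos (by positivity)).ne
  · have h1 : Tendsto (fun x : ℝ => stdCdf (α*x+τ)) atTop (𝓝 1) :=
      tendsto_stdCdf.comp (tendsto_atTop_add_const_right _ _ (tendsto_id.const_mul_atTop hα))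
    have h2 : Tendsto (fun x : ℝ => 1 + 1/x^2) atTop (𝓝 (1+0)) :=
      (tendsto_const_nhds.div_atTop (tendsto_pow_atTop two_ne_zero)).const_add 1
    have h3 := (h1.div_const c).div h2 (by norm_num)
    rw [add_zero, div_one] at h3
    refine h3.congr fun x => ?_
    have := (stdPdf_pos x).ne'
    have : 1 + 1/x^2 ≠ 0 := by positivity
    simp only [hf, Pi.div_apply, neg_div_neg_eq]
    field_simp

lemma tendsto_log_add_const_div (K : ℝ) :
    Tendsto (fun s : ℝ => (Real.log s + K) / s) atTop (𝓝 0) := by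
  have h := Real.isLittleO_log_id_atTop.tendsto_div_nhds_zero.add
    (tendsto_const_nhds (x := K).div_atTop tendsto_id)
  rw [add_zero] at h
  exact h.congr fun s => (add_div _ _ _).symm

/-- The quantile in the variable `s = √(2 ln(1/u))`: the terms `ln(2√π) + (1/2) ln ln(1/u)`
collapse to `ln s + ln √(2π)`. -/
lemma xquant_eq (α τ : ℝ) {s : ℝ} (hs : 0 < s) :
    xquant α τ (Real.exp (-s^2/2)) = s - (Real.log s +
      Real.log (Real.sqrt (2*Real.pi) * stdCdf (τ / Real.sqrt (1+α^2)))) / s := by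
  have hL : Real.log (1 / Real.exp (-s^2/2)) = s^2/2 := by
    rw [one_div, Real.log_inv, Real.log_exp]; ring
  have hsq : Real.sqrt (2 * (s^2/2)) = s := by
    rw [mul_div_cancel₀ _ (two_ne_zero), Real.sqrt_sq hs.le]
  have hlog : Real.log (2*Real.sqrt Real.pi) + (1/2) * Real.log (s^2/2)
      = Real.log s + Real.log (Real.sqrt (2*Real.pi)) := by
    have hpi := Real.pi_pos
    rw [Real.log_mul two_ne_zero (by positivity), Real.log_sqrt hpi.le,
      Real.log_sqrt (by positivity), Real.log_mul two_ne_zero hpi.ne',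
      Real.log_div (by positivity) two_ne_zero, Real.log_pow]
    push_cast
    ring
  rw [xquant, hL, hsq, hlog, Real.log_mul (by positivity) (stdCdf_pos _).ne', add_assoc]

/-- The quantile asymptotics along `u = exp(-s²/2)`, `s → ∞`. -/
lemma tendsto_in_s {α : ℝ} (hα : 0 < α) (τ : ℝ) :
    Tendsto (fun s : ℝ => (1 - esnCdf α τ (xquant α τ (Real.exp (-s^2/2)))) / Real.exp (-s^2/2))
      atTop (𝓝 1) := by
  have hmills := tendsto_esn_tail_div hα τ
  have hx := fun s hs => xquant_eq α τ (s := s) hs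
  set c := stdCdf (τ / Real.sqrt (1+α^2)) with hc
  have hc0 : 0 < c := stdCdf_pos _
  set K := Real.log (Real.sqrt (2*Real.pi) * c) with hK
  have hr := tendsto_log_add_const_div K
  set y : ℝ → ℝ := fun s => s - (Real.log s + K) / s with hy
  have hytop : Tendsto y atTop atTop := by
    have := tendsto_id.atTop_add (hr.neg)
    exact this.congr fun s => (sub_eq_add_neg _ _).symm
  have hys : Tendsto (fun s => y s / s) atTop (𝓝 1) := by
    have h := (hr.div_atTop tendsto_id).const_sub 1
    rw [sub_zero] at h
    refine h.congr' ?_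
    filter_upwards [eventually_gt_atTop 0] with s hs
    simp only [hy, id]
    field_simp
  have hexp : Tendsto (fun s => Real.exp (-((Real.log s + K) / s)^2/2)) atTop (𝓝 1) := by
    have h := (Real.continuous_exp.tendsto _).comp (((hr.pow 2).neg).div_const 2)
    rwa [show Real.exp (-0^2/2) = 1 by norm_num] at h
  have hlim := ((hmills.comp hytop).mul_const c).mul (hexp.div hys one_ne_zero)
  rw [one_div, inv_mul_cancel₀ hc0.ne', div_one, one_mul] at hlim
  refine hlim.congr' ?_
  filter_upwards [eventually_gt_atTop 0, hytop.eventually_gt_atTop 0] with s hs hys0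
  -- `exp (ln s + K)` contributes `s √(2π) c`, whose `√(2π)` cancels the constant in the density.
  have hpdf : stdPdf (y s) = Real.exp (-s^2/2) * s * c *
      Real.exp (-((Real.log s + K) / s)^2/2) := by
    have h1 : -(y s)^2/2 = -s^2/2 + Real.log s + K + -((Real.log s + K) / s)^2/2 := by
      simp only [hy]
      field_simp
      ring
    rw [stdPdf, h1, Real.exp_add, Real.exp_add, Real.exp_add, Real.exp_log hs, hK,
      Real.exp_log (by positivity)]
    field_simp
  rw [hx s hs]
  change (1 - esnCdf α τ (y s)) / (stdPdf (y s) / y s) * c * 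
      (Real.exp (-((Real.log s + K) / s)^2/2) / (y s / s)) =
    (1 - esnCdf α τ (y s)) / Real.exp (-s^2/2)
  rw [hpdf]
  have := Real.exp_pos (-((Real.log s + K) / s)^2/2)
  generalize Real.exp (-((Real.log s + K) / s)^2/2) = E at *
  field_simp

/-- x(u) is an asymptotic (1−u)-quantile: (1 − Φ_{α,τ}(x(u)))/u → 1 as u → 0⁺. -/
theorem esn1_quantile_asymptotics
    (α : ℝ) (hα : 0 < α) (τ : ℝ) :
    Tendsto (fun u : ℝ => (1 - esnCdf α τ (xquant α τ u)) / u)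
      (nhdsWithin 0 (Set.Ioi 0)) (nhds 1) := by
  have hs : Tendsto (fun u : ℝ => Real.sqrt (-2 * Real.log u)) (𝓝[>] 0) atTop :=
    Real.tendsto_sqrt_atTop.comp
      (Real.tendsto_log_nhdsGT_zero.const_mul_atBot_of_neg (by norm_num))
  refine ((tendsto_in_s hα τ).comp hs).congr' ?_
  filter_upwards [Ioo_mem_nhdsGT (zero_lt_one (α := ℝ))] with u hu
  have hlog : Real.log u < 0 := Real.log_neg hu.1 hu.2
  have : Real.exp (-(Real.sqrt (-2 * Real.log u))^2/2) = u := by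
    rw [Real.sq_sqrt (by linarith), show -(-2 * Real.log u)/2 = Real.log u by ring,
      Real.exp_log hu.1]
  simp only [Function.comp_apply, this]
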